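/- (Lemma 5.) Let C, D, m_h, m_v be positive integers with C ≥ 2D, m_h > D, and m_v < m_v^N(C,D,m_h). Then ⌈m_h/D⌉ > ⌊m_v/D⌋; in the paper's notation, m_{h;0} > m_{v;p₀}, where m_{v;p₀} = ⌊m_v/D⌋. -/

import Mathlib

open Finset

/-- The `p`-th polyphase length `⌈(m - p)/D⌉`. -/
def polyLen (D m p : ℕ) : ℤ := ⌈((m : ℚ) - (p : ℚ)) / (D : ℚ)⌉

/-- The necessary-length condition: `⌊m_v/D⌋ ≥ 1` and
`∑_{p=0}^{D-1} ⌊(m_{h;p} - 1)/⌊m_v/D⌋⌋ ≤ C - D`. -/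
def NecLenCond (C D mh mv : ℕ) : Prop :=
  1 ≤ mv / D ∧
    ∑ p ∈ Finset.range D, ⌊((polyLen D mh p : ℚ) - 1) / ((mv / D : ℕ) : ℚ)⌋
      ≤ (C : ℤ) - (D : ℤ)

/-- The necessary length `m_v^N(C,D,m_h)`. -/
noncomputable def mvN (C D mh : ℕ) : ℕ := sInf {mv : ℕ | NecLenCond C D mh mv}

/-!
If `⌊m_v/D⌋ ≥ m_{h;0}`, then `⌊m_v/D⌋` is at least every polyphase length `m_{h;p}`, because these
decrease in `p`. Every summand `⌊(m_{h;p} - 1)/⌊m_v/D⌋⌋` is then nonpositive, so `m_v` already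
satisfies the necessary-length condition and cannot lie below the least solution.
-/

section PolyphaseLength

variable (D m : ℕ)

theorem polyLen_zero : polyLen D m 0 = ⌈(m : ℚ) / (D : ℚ)⌉ := by
  rw [polyLen, Nat.cast_zero, sub_zero]

theorem polyLen_antitone : Antitone (polyLen D m) := by
  intro p q hpq
  unfold polyLen
  gcongr

variable {D m}

theorem polyLen_pos {p : ℕ} (hD : 0 < D) (hp : p < m) : 0 < polyLen D m p := by
  have hpm : (p : ℚ) < m := Nat.cast_lt.mpr hp
  exact Int.ceil_pos.mpr (div_pos (sub_pos.mpr hpm) (Nat.cast_pos.mpr hD))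

end PolyphaseLength

theorem floor_sub_one_div_nonpos {K : Type*} [Field K] [LinearOrder K] [IsStrictOrderedRing K]
    [FloorRing K] {a k : K} (hk : 0 < k) (hak : a ≤ k) : ⌊(a - 1) / k⌋ ≤ 0 := by
  have hlt : (a - 1) / k < 1 := (div_lt_one hk).mpr ((sub_one_lt a).trans_le hak)
  exact Int.floor_le_iff.mpr (by simpa using hlt)

section NecessaryLength

variable {C D mh mv : ℕ}

theorem necLenCond_of_polyLen_zero_le (hDC : D ≤ C) (hmv : 1 ≤ mv / D)
    (hle : polyLen D mh 0 ≤ ((mv / D : ℕ) : ℤ)) : NecLenCond C D mh mv := by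
  have polyLen_le (p : ℕ) : (polyLen D mh p : ℚ) ≤ ((mv / D : ℕ) : ℚ) := by
    rw [← Int.cast_natCast, Int.cast_le]
    exact (polyLen_antitone D mh p.zero_le).trans hle
  refine ⟨hmv, ?_⟩
  calc ∑ p ∈ Finset.range D, ⌊((polyLen D mh p : ℚ) - 1) / ((mv / D : ℕ) : ℚ)⌋
      ≤ 0 := Finset.sum_nonpos fun p _ ↦
        floor_sub_one_div_nonpos (Nat.cast_pos.mpr hmv) (polyLen_le p)
    _ ≤ (C : ℤ) - (D : ℤ) := sub_nonneg.mpr (Nat.cast_le.mpr hDC)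

theorem not_necLenCond_of_lt_mvN (h : mv < mvN C D mh) : ¬ NecLenCond C D mh mv :=
  Nat.notMem_of_lt_sInf h

theorem mh0_gt_mvp0_general (hD : 0 < D) (hDC : D ≤ C) (hmh : 0 < mh)
    (hmv : mv < mvN C D mh) : ((mv / D : ℕ) : ℤ) < ⌈(mh : ℚ) / (D : ℚ)⌉ := by
  rw [← polyLen_zero]
  by_contra! hle
  have hdiv : 1 ≤ mv / D := Nat.cast_pos.mp ((polyLen_pos hD hmh).trans_le hle)
  exact not_necLenCond_of_lt_mvN hmv (necLenCond_of_polyLen_zero_le hDC hdiv hle)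

end NecessaryLength

/-- Lemma 5: if `C ≥ 2D`, `m_h > D` and `m_v < m_v^N(C,D,m_h)`, then
`m_{h;0} = ⌈m_h/D⌉ > ⌊m_v/D⌋ = m_{v;p₀}`. -/
theorem mh0_gt_mvp0 (C D mh mv : ℕ) (hC : 0 < C) (hD : 0 < D)
    (hCD : 2 * D ≤ C) (hmh : D < mh) (hmvpos : 0 < mv) (hmv : mv < mvN C D mh) :
    ((mv / D : ℕ) : ℤ) < ⌈(mh : ℚ) / (D : ℚ)⌉ := by
  exact mh0_gt_mvp0_general hD (by omega) (by omega) hmv
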